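/- arXiv:2403.08418 — 3 statements merged into one kernel-verified Lean document; each statement's English description precedes it below -/
import Mathlib

section
/- Let V be a partial isometry on a complex Hilbert space H and let n ≥ 1. Then V^k is a partial isometry for every k ∈ {1,…,n} if and only if V maps (ker V^k)^⊥ into (ker V^{k-1})^⊥ for every k ∈ {1,…,n}. -/
open ContinuousLinearMap

/-- A bounded operator `V` on a Hilbert space is a partial isometry if it is isometric
on the orthogonal complement of its kernel. -/
def IsPartialIsometry {H : Type*} [NormedAddCommGroup H] [InnerProductSpace ℂ H]
    [CompleteSpace H] (V : H →L[ℂ] H) : Prop :=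
  ∀ x ∈ (LinearMap.ker V.toLinearMap)ᗮ, ‖V x‖ = ‖x‖

theorem pi_mem_aux {H : Type*} [NormedAddCommGroup H] [InnerProductSpace ℂ H] [CompleteSpace H]
    (W : H →L[ℂ] H) (hW : IsPartialIsometry W) (y : H) (hy : ‖W y‖ = ‖y‖) :
    y ∈ (LinearMap.ker W.toLinearMap)ᗮ := by
  have hc : IsClosed (LinearMap.ker W.toLinearMap : Set H) := W.isClosed_ker
  have : CompleteSpace (LinearMap.ker W.toLinearMap) := hc.completeSpace_coe
  obtain ⟨a, ha, b, hb, rfl⟩ :=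
    (LinearMap.ker W.toLinearMap).exists_add_mem_mem_orthogonal y
  have hWa : W a = 0 := ha
  have h1 : W (a + b) = W b := by rw [map_add, hWa, zero_add]
  rw [h1, hW b hb] at hy
  have h2 := norm_add_sq_eq_norm_sq_add_norm_sq_of_inner_eq_zero a b
    ((Submodule.mem_orthogonal _ _).1 hb a ha)
  rw [← hy] at h2
  have h3 : ‖a‖ = 0 := by nlinarith [norm_nonneg a]
  rw [norm_eq_zero.1 h3, zero_add]
  exact hb

theorem perp_norm_aux {H : Type*} [NormedAddCommGroup H] [InnerProductSpace ℂ H]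
    [CompleteSpace H] (V : H →L[ℂ] H) (hV : IsPartialIsometry V) (k : ℕ) (x : H)
    (hx : x ∈ (LinearMap.ker (V ^ (k + 1)).toLinearMap)ᗮ) : ‖V x‖ = ‖x‖ := by
  apply hV
  refine Submodule.orthogonal_le ?_ hx
  intro z hz
  have hz' : V z = 0 := hz
  change (V ^ (k + 1)) z = 0
  rw [pow_succ, ContinuousLinearMap.mul_apply, hz', map_zero]

theorem stmt_1 {H : Type*} [NormedAddCommGroup H] [InnerProductSpace ℂ H] [CompleteSpace H]
    (V : H →L[ℂ] H) (hV : IsPartialIsometry V) (n : ℕ) (hn : 1 ≤ n) :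
    (∀ k ∈ Finset.Icc 1 n, IsPartialIsometry (V ^ k)) ↔
      (∀ k ∈ Finset.Icc 1 n, ∀ x ∈ (LinearMap.ker (V ^ k).toLinearMap)ᗮ,
        V x ∈ (LinearMap.ker (V ^ (k - 1)).toLinearMap)ᗮ) := by
  have h0 : IsPartialIsometry (V ^ 0) := by
    intro x _
    simp
  constructor
  · intro h k hk x hx
    rw [Finset.mem_Icc] at hk
    obtain ⟨k, rfl⟩ : ∃ m, k = m + 1 := ⟨k - 1, by omega⟩
    rw [Nat.add_sub_cancel]
    have hP : IsPartialIsometry (V ^ k) := by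
      rcases Nat.eq_zero_or_pos k with rfl | hpos
      · exact h0
      · exact h k (Finset.mem_Icc.2 ⟨hpos, by omega⟩)
    apply pi_mem_aux _ hP
    have h1 := h (k + 1) (Finset.mem_Icc.2 hk) x hx
    rw [pow_succ, ContinuousLinearMap.mul_apply] at h1
    rw [h1, perp_norm_aux V hV k x hx]
  · intro h
    have key : ∀ k, k ≤ n → IsPartialIsometry (V ^ k) := by
      intro k
      induction k with
      | zero => intro _; exact h0
      | succ k ih =>
        intro hk x hx
        have h1 := h (k + 1) (Finset.mem_Icc.2 ⟨by omega, hk⟩) x hx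
        rw [Nat.add_sub_cancel] at h1
        have h2 := ih (by omega) _ h1
        rw [pow_succ, ContinuousLinearMap.mul_apply, h2, perp_norm_aux V hV k x hx]
    intro k hk
    exact key k (Finset.mem_Icc.1 hk).2
end

section
/- Let V be a partial isometry on a complex Hilbert space H such that V^n is a partial isometry for some n ≥ 2. If V maps (ker V^{n+1})^⊥ into (ker V^n)^⊥, then V^{n+1} is a partial isometry. -/
open ContinuousLinearMap

theorem stmt_11 {H : Type*} [NormedAddCommGroup H] [InnerProductSpace ℂ H] [CompleteSpace H]
    (V : H →L[ℂ] H) (hV : IsPartialIsometry V) (n : ℕ) (hn : 2 ≤ n)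
    (hVn : IsPartialIsometry (V ^ n))
    (h : ∀ x ∈ (LinearMap.ker (V ^ (n + 1)).toLinearMap)ᗮ, V x ∈ (LinearMap.ker (V ^ n).toLinearMap)ᗮ) :
    IsPartialIsometry (V ^ (n + 1)) := by
  intro x hx
  have hx' : x ∈ (LinearMap.ker V.toLinearMap)ᗮ := by
    refine Submodule.orthogonal_le ?_ hx
    intro y hy
    have hy' : V y = 0 := hy
    change (V ^ (n + 1)) y = 0
    rw [pow_succ, ContinuousLinearMap.mul_apply, hy', map_zero]
  rw [pow_succ, ContinuousLinearMap.mul_apply, hVn _ (h x hx), hV x hx']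
end

section
/- Let V be a contraction on a complex Hilbert space H and suppose V^k is a partial isometry for some k ≥ 2. If (1) ‖Vh‖ = ‖h‖ for every h ∈ ker(V^k) ∩ (ker V)^⊥, and (2) V maps (ker V^k)^⊥ into (ker V^{k-1})^⊥, then V is a partial isometry. -/
open ContinuousLinearMap

theorem stmt_14 {H : Type*} [NormedAddCommGroup H] [InnerProductSpace ℂ H] [CompleteSpace H]
    (V : H →L[ℂ] H) (hcontr : ‖V‖ ≤ 1)
    (k : ℕ) (hk : 2 ≤ k) (hpi : IsPartialIsometry (V ^ k))
    (h1 : ∀ h ∈ LinearMap.ker (V ^ k).toLinearMap ⊓ (LinearMap.ker V.toLinearMap)ᗮ, ‖V h‖ = ‖h‖)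
    (h2 : ∀ x ∈ (LinearMap.ker (V ^ k).toLinearMap)ᗮ, V x ∈ (LinearMap.ker (V ^ (k - 1)).toLinearMap)ᗮ) :
    IsPartialIsometry V := by
  obtain ⟨m, rfl⟩ : ∃ m, k = m + 1 := ⟨k - 1, by omega⟩
  rw [Nat.add_sub_cancel] at h2
  have hV : ∀ y, ‖V y‖ ≤ ‖y‖ := fun y => by
    simpa using V.le_of_opNorm_le hcontr y
  have hVn : ∀ n : ℕ, ∀ y, ‖(V ^ n) y‖ ≤ ‖y‖ := by
    intro n
    induction n with
    | zero => intro y; simp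
    | succ n ih =>
      intro y
      rw [pow_succ]
      exact (ih (V y)).trans (hV y)
  have hs : ∀ y, (V ^ (m + 1)) y = (V ^ m) (V y) := fun y => by
    rw [pow_succ]; rfl
  intro x hx
  have hclosed : IsClosed ((LinearMap.ker (V ^ (m + 1)).toLinearMap : Submodule ℂ H) : Set H) :=
    (V ^ (m + 1)).isClosed_ker
  haveI : CompleteSpace (LinearMap.ker (V ^ (m + 1)).toLinearMap) :=
    hclosed.completeSpace_coe
  obtain ⟨a, ha, b, hb, rfl⟩ :=
    (LinearMap.ker (V ^ (m + 1)).toLinearMap).exists_add_mem_mem_orthogonal x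
  have hle : LinearMap.ker V.toLinearMap ≤ LinearMap.ker (V ^ (m + 1)).toLinearMap := by
    intro y hy
    have hy' : V y = 0 := hy
    change (V ^ (m + 1)) y = 0
    rw [hs, hy', map_zero]
  have hb' := Submodule.orthogonal_le hle hb
  have ha' : a ∈ (LinearMap.ker V.toLinearMap)ᗮ := by
    simpa using Submodule.sub_mem _ hx hb'
  have e1 : ‖V a‖ = ‖a‖ := h1 a ⟨ha, ha'⟩
  have e2 : ‖V b‖ = ‖b‖ := by
    refine le_antisymm (hV b) ?_
    have h := hpi b hb
    rw [hs] at h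
    rw [← h]
    exact hVn m (V b)
  have hVa : V a ∈ LinearMap.ker (V ^ m).toLinearMap := by
    change (V ^ m) (V a) = 0
    rw [← hs]; exact ha
  have i1 : inner ℂ a b = 0 := hb a ha
  have i2 : inner ℂ (V a) (V b) = 0 := h2 b hb _ hVa
  have p1 := norm_add_sq_eq_norm_sq_add_norm_sq_of_inner_eq_zero a b i1
  have p2 := norm_add_sq_eq_norm_sq_add_norm_sq_of_inner_eq_zero (V a) (V b) i2
  rw [map_add]
  rw [e1, e2, ← p1] at p2
  exact (mul_self_inj (norm_nonneg _) (norm_nonneg _)).1 p2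
end
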